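/- Let A and B be bounded self-adjoint operators on a Hilbert space and let σ and Δ be Borel subsets of ℝ. Then dist(σ, Δ)·‖E_A(σ)·E_B(Δ)‖ ≤ (π/2)·‖A − B‖. -/

import Mathlib

/-- `E` is the projection-valued spectral measure of the bounded self-adjoint operator `T`
on the complex Hilbert space `H`: each `E Δ` (for Borel `Δ ⊆ ℝ`) is an orthogonal
projection, `E` is multiplicative and countably additive (in the strong sense), `E ℝ = 1`,
each `E Δ` commutes with `T`, and on the range of `E Δ` the operator `T` has its
approximate point spectrum inside the closure of `Δ` (which uniquely characterizes the
spectral measure of `T`). -/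
structure IsSpectralMeasure {H : Type*} [NormedAddCommGroup H] [InnerProductSpace ℂ H]
    [CompleteSpace H] (T : H →L[ℂ] H) (E : Set ℝ → H →L[ℂ] H) : Prop where
  isSelfAdjoint : ∀ Δ : Set ℝ, MeasurableSet Δ → IsSelfAdjoint (E Δ)
  map_inter : ∀ Δ₁ Δ₂ : Set ℝ, MeasurableSet Δ₁ → MeasurableSet Δ₂ →
    E Δ₁ * E Δ₂ = E (Δ₁ ∩ Δ₂)
  map_univ : E Set.univ = 1
  countably_additive : ∀ Δ : ℕ → Set ℝ, (∀ n, MeasurableSet (Δ n)) →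
    Pairwise (Function.onFun Disjoint Δ) →
    ∀ x : H, HasSum (fun n => E (Δ n) x) (E (⋃ n, Δ n) x)
  commutes : ∀ Δ : Set ℝ, MeasurableSet Δ → Commute T (E Δ)
  spectrum_loc : ∀ Δ : Set ℝ, MeasurableSet Δ → ∀ x : H, E Δ x = x →
    ∀ μ : ℝ, Metric.infDist μ Δ * ‖x‖ ≤ ‖T x - (μ : ℂ) • x‖

open scoped Real

open MeasureTheory Set Filter Topology

lemma hasSum_of_eq_of_eq {α : Type*} [AddCommMonoid α] [TopologicalSpace α] {f g : ℕ → α}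
    {a b : α} (h : HasSum f a) (hfg : ∀ n, g n = f n) (hab : b = a) : HasSum g b := by
  rw [hab, funext hfg]
  exact h

/-- Partial fractions of `coth u - 1 / u`, with `coth u` written with decaying exponentials. -/
lemma hasSum_coth {u : ℝ} (hu : 0 < u) :
    HasSum (fun n : ℕ => 2 * u / (u ^ 2 + ((n + 1 : ℕ) * π) ^ 2))
      ((1 + Real.exp (-(2 * u))) / (1 - Real.exp (-(2 * u))) - 1 / u) := by
  have hπ := Real.pi_pos
  have hzmem : (u / π : ℝ) * Complex.I ∈ Complex.integerComplement := by
    rintro ⟨n, hn⟩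
    have := congrArg Complex.im hn
    simp at this
    grind
  have hs := (summable_cotTerm hzmem).hasSum
  rw [show (∑' n, cotTerm ((u / π : ℝ) * Complex.I) n) = _ from
    (cot_series_rep' hzmem).symm] at hs
  have h2 := hs.mul_left (Complex.I / π)
  rw [← Complex.hasSum_ofReal]
  have hπc : (π : ℂ) ≠ 0 := by exact_mod_cast hπ.ne'
  have huc : (u : ℂ) ≠ 0 := by exact_mod_cast hu.ne'
  refine hasSum_of_eq_of_eq h2 (fun n => ?_) ?_
  · rw [cotTerm]
    have e1 : ((u : ℂ) ^ 2 + ((n + 1 : ℕ) * π) ^ 2) ≠ 0 := by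
      norm_cast; positivity
    have e2 : ((u / π : ℝ) * Complex.I - (n + 1) : ℂ) ≠ 0 := by
      intro h
      have := congrArg Complex.im h
      simp at this
      grind
    have e3 : ((u / π : ℝ) * Complex.I + (n + 1) : ℂ) ≠ 0 := by
      intro h
      have := congrArg Complex.im h
      simp at this
      grind
    rw [div_add_div _ _ e2 e3]
    have : ((u / π : ℝ) * Complex.I - (n + 1) : ℂ) * ((u / π : ℝ) * Complex.I + (n + 1))
        = - ((u : ℂ) ^ 2 + ((n + 1 : ℕ) * π) ^ 2) / π ^ 2 := by
      push_cast
      field_simp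
      ring_nf
      simp
    rw [this]
    push_cast at e1 ⊢
    field_simp
    ring_nf
    simp
  · rw [Complex.cot_pi_eq_exp_ratio]
    have : Complex.exp (2 * π * Complex.I * ((u / π : ℝ) * Complex.I)) =
        (Real.exp (-(2 * u)) : ℂ) := by
      rw [Complex.ofReal_exp]
      congr 1
      push_cast
      field_simp
      simp
    rw [this]
    have hlt : Real.exp (-(2 * u)) < 1 := by simpa using hu
    have hne : (1 - (Real.exp (-(2 * u)) : ℂ)) ≠ 0 := by
      norm_cast; linarith
    push_cast at hne ⊢
    field_simp
    ring

/-- Partial fractions of `tanh (u / 2)`, the latter written with decaying exponentials. -/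
lemma hasSum_tanh_half {u : ℝ} (hu : 0 < u) :
    HasSum (fun k : ℕ => 4 * u / (u ^ 2 + ((2 * k + 1) * π) ^ 2))
      ((1 - Real.exp (-u)) / (1 + Real.exp (-u))) := by
  have h1 := (hasSum_coth hu).mul_left 2
  have h2 := hasSum_coth (half_pos hu)
  set f : ℕ → ℝ := fun n => 2 * (2 * u / (u ^ 2 + ((n + 1 : ℕ) * π) ^ 2)) with hf
  have he : Summable fun k => f (2 * k) := h1.summable.comp_injective
    (mul_right_injective₀ two_ne_zero)
  have ho := hasSum_of_eq_of_eq (g := fun k => f (2 * k + 1)) h2 (fun k => by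
    simp only [hf]
    push_cast
    have : u ^ 2 + ((2 * k + 1 + 1) * π) ^ 2 = 4 * ((u / 2) ^ 2 + ((k + 1) * π) ^ 2) := by ring
    rw [this]
    have : (u / 2) ^ 2 + ((k + 1) * π) ^ 2 ≠ 0 := by positivity
    field_simp
    norm_num) rfl
  have h3 := (he.hasSum.even_add_odd ho).unique h1
  have h4 := he.hasSum
  rw [eq_sub_of_add_eq h3] at h4
  refine hasSum_of_eq_of_eq h4 (fun k => ?_) ?_
  · simp only [hf]
    push_cast
    ring
  · have hq : Real.exp (-(2 * u)) = Real.exp (-u) ^ 2 := by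
      rw [← Real.exp_nat_mul]; congr 1; push_cast; ring
    have hq' : -(2 * (u / 2)) = -u := by ring
    rw [hq, hq']
    have hlt : Real.exp (-u) < 1 := by simpa using hu
    have hpos := Real.exp_pos (-u)
    generalize Real.exp (-u) = q at *
    have e1 : 1 - q ≠ 0 := by linarith
    have e2 : 1 + q ≠ 0 := by linarith
    have e3 : 1 - q ^ 2 = (1 - q) * (1 + q) := by ring
    rw [e3]
    field_simp
    ring

lemma tendsto_mul_arctan_div_atTop {a : ℝ} (ha : 0 ≤ a) :
    Tendsto (fun u => a * Real.arctan (u / a)) atTop (𝓝 (a * (π / 2))) := by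
  rcases ha.eq_or_lt with rfl | ha
  · simp
  · exact ((Real.tendsto_arctan_atTop.mono_right nhdsWithin_le_nhds).comp
      (tendsto_id.atTop_div_const ha)).const_mul a

lemma hasDerivAt_mul_arctan_div {a u : ℝ} (hu : 0 < u) :
    HasDerivAt (fun u => a * Real.arctan (u / a)) (a ^ 2 / (u ^ 2 + a ^ 2)) u := by
  rcases eq_or_ne a 0 with rfl | ha
  · simpa using hasDerivAt_const u (0 : ℝ)
  · have := (((hasDerivAt_id u).div_const a).arctan).const_mul a
    refine this.congr_deriv ?_
    have : u ^ 2 + a ^ 2 ≠ 0 := by positivity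
    have : a ^ 2 + u ^ 2 ≠ 0 := by positivity
    simp
    field_simp
    ring

/-- `∫ u > 0, 4 * u ^ 2 / ((u ^ 2 + a ^ 2) * (u ^ 2 + b ^ 2)) = 2 * π / (a + b)`,
together with integrability. -/
lemma integral_rational_kernel {a b : ℝ} (ha : 0 ≤ a) (hb : 0 < b) :
    IntegrableOn (fun u => 4 * u / (u ^ 2 + b ^ 2) * (u / (u ^ 2 + a ^ 2))) (Ioi 0) ∧
    ∫ u in Ioi (0 : ℝ), 4 * u / (u ^ 2 + b ^ 2) * (u / (u ^ 2 + a ^ 2)) = 2 * π / (a + b) := by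
  suffices h : ∃ F : ℝ → ℝ, Continuous F ∧ F 0 = 0 ∧
      (∀ u ∈ Ioi (0 : ℝ), HasDerivAt F (4 * u / (u ^ 2 + b ^ 2) * (u / (u ^ 2 + a ^ 2))) u) ∧
      Tendsto F atTop (𝓝 (2 * π / (a + b))) by
    obtain ⟨F, hc, h0, hd, ht⟩ := h
    have hpos : ∀ u ∈ Ioi (0 : ℝ), 0 ≤ 4 * u / (u ^ 2 + b ^ 2) * (u / (u ^ 2 + a ^ 2)) := by
      intro u hu
      have hu : 0 < u := hu
      positivity
    refine ⟨integrableOn_Ioi_deriv_of_nonneg hc.continuousWithinAt hd hpos ht, ?_⟩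
    rw [integral_Ioi_of_hasDerivAt_of_nonneg hc.continuousWithinAt hd hpos ht, h0, sub_zero]
  rcases eq_or_ne a b with rfl | hab
  · refine ⟨fun u => 2 / a ^ 2 * (a * Real.arctan (u / a)) - 2 * (u / (u ^ 2 + a ^ 2)),
      ?_, by simp, ?_, ?_⟩
    · have : ∀ u : ℝ, u ^ 2 + a ^ 2 ≠ 0 := fun u => by positivity
      fun_prop (disch := assumption)
    · intro u hu
      have hu : 0 < u := hu
      have hne : u ^ 2 + a ^ 2 ≠ 0 := by positivity
      have h1 := (hasDerivAt_mul_arctan_div (a := a) hu).const_mul (2 / a ^ 2)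
      have h2 := ((hasDerivAt_id u).div (((hasDerivAt_id u).pow 2).add_const (a ^ 2))
        (by simpa using hne)).const_mul 2
      refine (h1.sub h2).congr_deriv ?_
      simp
      field_simp
      ring
    · have h1 := (tendsto_mul_arctan_div_atTop ha).const_mul (2 / a ^ 2)
      have h2 : Tendsto (fun u : ℝ => u / (u ^ 2 + a ^ 2)) atTop (𝓝 0) := by
        refine squeeze_zero' (g := fun u : ℝ => u⁻¹) ?_ ?_ tendsto_inv_atTop_zero
        · filter_upwards [eventually_gt_atTop 0] with u hu
          positivity
        · filter_upwards [eventually_gt_atTop 0] with u hu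
          rw [div_le_iff₀ (by positivity)]
          have : u⁻¹ * (u ^ 2 + a ^ 2) = u + u⁻¹ * a ^ 2 := by field_simp
          rw [this]
          have : 0 ≤ u⁻¹ * a ^ 2 := by positivity
          linarith
      convert h1.sub (h2.const_mul 2) using 2
      field_simp
      ring
  · have hne : b ^ 2 - a ^ 2 ≠ 0 := by
      rw [sq_sub_sq]
      exact mul_ne_zero (by positivity) (sub_ne_zero.2 hab.symm)
    refine ⟨fun u => 4 / (b ^ 2 - a ^ 2) *
      (b * Real.arctan (u / b) - a * Real.arctan (u / a)), ?_, by simp, ?_, ?_⟩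
    · fun_prop
    · intro u hu
      have hu : 0 < u := hu
      have e1 : u ^ 2 + a ^ 2 ≠ 0 := by positivity
      have e2 : u ^ 2 + b ^ 2 ≠ 0 := by positivity
      refine (((hasDerivAt_mul_arctan_div (a := b) hu).sub
        (hasDerivAt_mul_arctan_div (a := a) hu)).const_mul (4 / (b ^ 2 - a ^ 2))).congr_deriv ?_
      field_simp
      ring
    · convert ((tendsto_mul_arctan_div_atTop hb.le).sub
        (tendsto_mul_arctan_div_atTop ha)).const_mul (4 / (b ^ 2 - a ^ 2)) using 2
      have e3 : a + b ≠ 0 := by positivity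
      have e4 : b - a ≠ 0 := sub_ne_zero.2 hab.symm
      have : b ^ 2 - a ^ 2 = (b - a) * (a + b) := by ring
      rw [this]
      field_simp
      norm_num

/-- The multiplier obtained by integrating `2 tanh (u / 2) sin (π x) sin (s x) exp (-u x)`
over `x > 0`. -/
noncomputable def favardMultiplier (s u : ℝ) : ℝ :=
  (1 - Real.exp (-u)) / (1 + Real.exp (-u)) *
    (u / (u ^ 2 + (s - π) ^ 2) - u / (u ^ 2 + (s + π) ^ 2))

lemma favardMultiplier_neg (s u : ℝ) : favardMultiplier (-s) u = -favardMultiplier s u := by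
  unfold favardMultiplier
  rw [show (-s - π) ^ 2 = (s + π) ^ 2 by ring, show (-s + π) ^ 2 = (s - π) ^ 2 by ring]
  ring

lemma hasSum_telescope_inv {s : ℝ} (hs : 0 < s) :
    HasSum (fun k : ℕ => 2 * π / (s - π + (2 * k + 1) * π) - 2 * π / (s + π + (2 * k + 1) * π))
      (2 * π / s) := by
  have hπ := Real.pi_pos
  set g : ℕ → ℝ := fun k => 2 * π / (s + k * (2 * π)) with hg
  have hterm : ∀ k : ℕ, 2 * π / (s - π + (2 * k + 1) * π) - 2 * π / (s + π + (2 * k + 1) * π)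
      = g k - g (k + 1) := by
    intro k
    simp only [hg]
    push_cast
    ring_nf
  have hanti : ∀ k, g (k + 1) ≤ g k := by
    intro k
    simp only [hg]
    gcongr
    exact k.le_succ
  have hlim : Tendsto g atTop (𝓝 0) := by
    refine Tendsto.div_atTop tendsto_const_nhds ?_
    exact tendsto_atTop_add_const_left _ _
      (tendsto_natCast_atTop_atTop.atTop_mul_const (by positivity))
  simp only [hterm]
  rw [hasSum_iff_tendsto_nat_of_nonneg (fun k => sub_nonneg.2 (hanti k))]
  simp only [Finset.sum_range_sub']
  have h0 : g 0 = 2 * π / s := by simp [hg]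
  rw [h0]
  simpa using hlim.const_sub (2 * π / s)

lemma integral_favardMultiplier_of_pi_le {s : ℝ} (hs : π ≤ s) :
    ∫ u in Ioi (0 : ℝ), favardMultiplier s u = 2 * π / s := by
  have hπ := Real.pi_pos
  have hs0 : 0 < s := hπ.trans_le hs
  set F : ℕ → ℝ → ℝ := fun k u => 4 * u / (u ^ 2 + ((2 * k + 1) * π) ^ 2) *
    (u / (u ^ 2 + (s - π) ^ 2)) - 4 * u / (u ^ 2 + ((2 * k + 1) * π) ^ 2) *
    (u / (u ^ 2 + (s + π) ^ 2)) with hF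
  have hI1 := fun k : ℕ => integral_rational_kernel (a := s - π) (b := (2 * k + 1) * π)
    (by linarith) (by positivity)
  have hI2 := fun k : ℕ => integral_rational_kernel (a := s + π) (b := (2 * k + 1) * π)
    (by linarith) (by positivity)
  have hInt : ∀ k, Integrable (F k) (volume.restrict (Ioi 0)) :=
    fun k => (hI1 k).1.sub (hI2 k).1
  have hval : ∀ k : ℕ, ∫ u in Ioi (0 : ℝ), F k u =
      2 * π / (s - π + (2 * k + 1) * π) - 2 * π / (s + π + (2 * k + 1) * π) := by
    intro k
    rw [← (hI1 k).2, ← (hI2 k).2]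
    exact integral_sub (hI1 k).1 (hI2 k).1
  have hnonneg : ∀ k : ℕ, ∀ u ∈ Ioi (0 : ℝ), 0 ≤ F k u := by
    intro k u hu
    have hu : 0 < u := hu
    simp only [hF, ← mul_sub]
    refine mul_nonneg (by positivity) (sub_nonneg.2 ?_)
    gcongr u / (u ^ 2 + ?_)
    nlinarith
  have hnorm : ∀ k : ℕ, ∫ u in Ioi (0 : ℝ), ‖F k u‖ = ∫ u in Ioi (0 : ℝ), F k u := fun k =>
    setIntegral_congr_fun measurableSet_Ioi fun u hu => Real.norm_of_nonneg (hnonneg k u hu)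
  have hsum := hasSum_telescope_inv hs0
  have key := hasSum_integral_of_summable_integral_norm hInt
    (by simpa only [hnorm, hval] using hsum.summable)
  simp only [hval] at key
  rw [hsum.unique key]
  refine setIntegral_congr_fun measurableSet_Ioi fun u hu => ?_
  have h := (hasSum_tanh_half hu).mul_right
    (u / (u ^ 2 + (s - π) ^ 2) - u / (u ^ 2 + (s + π) ^ 2))
  simp only [favardMultiplier, hF, ← mul_sub]
  exact h.tsum_eq.symm

lemma integral_favardMultiplier {s : ℝ} (hs : π ≤ |s|) :
    ∫ u in Ioi (0 : ℝ), favardMultiplier s u = 2 * π / s := by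
  rcases le_abs.1 hs with h | h
  · exact integral_favardMultiplier_of_pi_le h
  · have := integral_favardMultiplier_of_pi_le h
    simp only [favardMultiplier_neg, integral_neg, div_neg] at this
    exact neg_injective this

lemma integrableOn_favardMultiplier {s : ℝ} (hs : π ≤ |s|) :
    IntegrableOn (favardMultiplier s) (Ioi 0) := by
  refine Integrable.of_integral_ne_zero ?_
  rw [integral_favardMultiplier hs]
  have hs0 : s ≠ 0 := abs_pos.1 (Real.pi_pos.trans_le hs)
  have := Real.pi_ne_zero
  positivity

lemma integrableOn_cos_mul_exp_neg {u : ℝ} (hu : 0 < u) (c : ℝ) :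
    IntegrableOn (fun x => Real.cos (c * x) * Real.exp (-u * x)) (Ioi 0) := by
  refine Integrable.mono' (exp_neg_integrableOn_Ioi 0 hu) (by fun_prop) (ae_of_all _ fun x => ?_)
  rw [norm_mul, Real.norm_of_nonneg (Real.exp_pos _).le]
  exact mul_le_of_le_one_left (Real.exp_pos _).le (Real.abs_cos_le_one _)

lemma integral_cos_mul_exp_neg {u : ℝ} (hu : 0 < u) (c : ℝ) :
    ∫ x in Ioi (0 : ℝ), Real.cos (c * x) * Real.exp (-u * x) = u / (u ^ 2 + c ^ 2) := by
  have hre : (-u + c * Complex.I : ℂ).re < 0 := by simpa using hu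
  have h := congrArg Complex.re (integral_exp_mul_complex_Ioi hre 0)
  have hi := integrableOn_exp_mul_complex_Ioi hre 0
  rw [← RCLike.re_to_complex, ← integral_re hi] at h
  trans ∫ x in Ioi (0 : ℝ), RCLike.re (Complex.exp ((-u + c * Complex.I) * x))
  · refine setIntegral_congr_fun measurableSet_Ioi fun x _ => ?_
    simp [Complex.exp_re]
    ring
  · rw [h]
    simp [Complex.div_re, Complex.normSq_apply]
    ring

lemma integral_sin_mul_sin_mul_exp_neg {u : ℝ} (hu : 0 < u) (s : ℝ) :
    ∫ x in Ioi (0 : ℝ), Real.sin (π * x) * Real.exp (-u * x) * Real.sin (s * x) =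
      (u / (u ^ 2 + (s - π) ^ 2) - u / (u ^ 2 + (s + π) ^ 2)) / 2 := by
  rw [← integral_cos_mul_exp_neg hu, ← integral_cos_mul_exp_neg hu,
    ← integral_sub (integrableOn_cos_mul_exp_neg hu _) (integrableOn_cos_mul_exp_neg hu _),
    ← integral_div]
  refine setIntegral_congr_fun measurableSet_Ioi fun x _ => ?_
  simp only [sub_mul, add_mul, Real.cos_sub, Real.cos_add]
  ring

lemma integrableOn_abs_sin_mul_exp_neg {u : ℝ} (hu : 0 < u) :
    IntegrableOn (fun x => |Real.sin (π * x)| * Real.exp (-u * x)) (Ioi 0) := by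
  refine Integrable.mono' (exp_neg_integrableOn_Ioi 0 hu)
    (Continuous.aestronglyMeasurable (by fun_prop)) (ae_of_all _ fun x => ?_)
  rw [norm_mul, Real.norm_of_nonneg (Real.exp_pos _).le, Real.norm_eq_abs, abs_abs]
  exact mul_le_of_le_one_left (Real.exp_pos _).le (Real.abs_sin_le_one _)

lemma integral_sin_pi_mul_exp_neg_zero_one {u : ℝ} (hu : 0 < u) :
    ∫ x in (0 : ℝ)..1, Real.sin (π * x) * Real.exp (-u * x) =
      π * (1 + Real.exp (-u)) / (π ^ 2 + u ^ 2) := by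
  have hne : π ^ 2 + u ^ 2 ≠ 0 := by positivity
  have hd : ∀ x ∈ uIcc (0 : ℝ) 1, HasDerivAt
      (fun x => -(π * Real.cos (π * x) + u * Real.sin (π * x)) * Real.exp (-u * x) /
        (π ^ 2 + u ^ 2)) (Real.sin (π * x) * Real.exp (-u * x)) x := by
    intro x _
    have h1 : HasDerivAt (fun x : ℝ => π * x) π x := by
      simpa using (hasDerivAt_id x).const_mul π
    have h2 : HasDerivAt (fun x : ℝ => -u * x) (-u) x := by
      simpa using (hasDerivAt_id x).const_mul (-u)
    refine ((((h1.cos.const_mul π).add (h1.sin.const_mul u)).neg.mul h2.exp).div_const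
      (π ^ 2 + u ^ 2)).congr_deriv ?_
    simp only [Pi.add_apply, Pi.neg_apply]
    field_simp
    ring
  rw [intervalIntegral.integral_eq_sub_of_hasDerivAt hd
    (Continuous.intervalIntegrable (by fun_prop) _ _)]
  simp
  field_simp
  ring

lemma integral_abs_sin_mul_exp_neg {u : ℝ} (hu : 0 < u) :
    (1 - Real.exp (-u)) / (1 + Real.exp (-u)) *
      ∫ x in Ioi (0 : ℝ), |Real.sin (π * x)| * Real.exp (-u * x) = π / (π ^ 2 + u ^ 2) := by
  set J := ∫ x in Ioi (0 : ℝ), |Real.sin (π * x)| * Real.exp (-u * x) with hJ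
  have hInt := integrableOn_abs_sin_mul_exp_neg hu
  have hsplit : J = (∫ x in Ioc (0 : ℝ) 1, |Real.sin (π * x)| * Real.exp (-u * x)) +
      ∫ x in Ioi (1 : ℝ), |Real.sin (π * x)| * Real.exp (-u * x) := by
    rw [hJ, ← Ioc_union_Ioi_eq_Ioi zero_le_one]
    refine setIntegral_union Ioc_disjoint_Ioi_same measurableSet_Ioi
      (hInt.mono_set Ioc_subset_Ioi_self) (hInt.mono_set (Ioi_subset_Ioi zero_le_one))
  have hfirst : (∫ x in Ioc (0 : ℝ) 1, |Real.sin (π * x)| * Real.exp (-u * x)) =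
      π * (1 + Real.exp (-u)) / (π ^ 2 + u ^ 2) := by
    rw [← integral_sin_pi_mul_exp_neg_zero_one hu,
      intervalIntegral.integral_of_le zero_le_one]
    refine setIntegral_congr_fun measurableSet_Ioc fun x hx => ?_
    rw [abs_of_nonneg (Real.sin_nonneg_of_nonneg_of_le_pi
      (mul_nonneg Real.pi_pos.le hx.1.le) (mul_le_of_le_one_right Real.pi_pos.le hx.2))]
  have hshift : (∫ x in Ioi (1 : ℝ), |Real.sin (π * x)| * Real.exp (-u * x)) =
      Real.exp (-u) * J := by
    have h := (measurePreserving_add_right volume (1 : ℝ)).setIntegral_preimage_emb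
      (measurableEmbedding_addRight 1) (fun x => |Real.sin (π * x)| * Real.exp (-u * x)) (Ioi 1)
    rw [← h, hJ, ← integral_const_mul]
    have hpre : (fun x : ℝ => x + 1) ⁻¹' Ioi 1 = Ioi 0 := by simp
    rw [hpre]
    refine setIntegral_congr_fun measurableSet_Ioi fun x _ => ?_
    rw [mul_add, mul_one, Real.sin_add_pi, abs_neg, mul_add, Real.exp_add, mul_one]
    ring
  rw [hfirst, hshift] at hsplit
  have hpos := Real.exp_pos (-u)
  have hne : π ^ 2 + u ^ 2 ≠ 0 := by positivity
  have h1 : (1 - Real.exp (-u)) * J = π * (1 + Real.exp (-u)) / (π ^ 2 + u ^ 2) := by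
    linarith
  rw [div_mul_eq_mul_div, h1]
  field_simp

lemma integral_pi_div_pi_sq_add_sq :
    IntegrableOn (fun u => π / (π ^ 2 + u ^ 2)) (Ioi 0) ∧
      ∫ u in Ioi (0 : ℝ), π / (π ^ 2 + u ^ 2) = π / 2 := by
  have hπ := Real.pi_pos
  have hc : Continuous (fun u => Real.arctan (u / π)) := by fun_prop
  have hd : ∀ u ∈ Ioi (0 : ℝ),
      HasDerivAt (fun u => Real.arctan (u / π)) (π / (π ^ 2 + u ^ 2)) u := by
    intro u hu
    refine ((hasDerivAt_id u).div_const π).arctan.congr_deriv ?_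
    have : π ^ 2 + u ^ 2 ≠ 0 := by positivity
    simp only [id]
    field_simp
  have hpos : ∀ u ∈ Ioi (0 : ℝ), 0 ≤ π / (π ^ 2 + u ^ 2) := fun u _ => by positivity
  have ht : Tendsto (fun u => Real.arctan (u / π)) atTop (𝓝 (π / 2)) :=
    (Real.tendsto_arctan_atTop.mono_right nhdsWithin_le_nhds).comp
      (tendsto_id.atTop_div_const hπ)
  refine ⟨integrableOn_Ioi_deriv_of_nonneg hc.continuousWithinAt hd hpos ht, ?_⟩
  rw [integral_Ioi_of_hasDerivAt_of_nonneg hc.continuousWithinAt hd hpos ht]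
  simp

lemma norm_sum_mul_sin_le {ι : Type*} (t : Finset ι) (s : ι → ℝ) (y : ι → ℂ) {C : ℝ}
    (hC : ∀ x : ℝ, ‖∑ i ∈ t, y i * Complex.exp (s i * x * Complex.I)‖ ≤ C) (x : ℝ) :
    ‖∑ i ∈ t, y i * (Real.sin (s i * x) : ℂ)‖ ≤ C := by
  have h : ∑ i ∈ t, y i * (Real.sin (s i * x) : ℂ) =
      ((∑ i ∈ t, y i * Complex.exp (s i * (-x : ℝ) * Complex.I)) -
        ∑ i ∈ t, y i * Complex.exp (s i * x * Complex.I)) * (Complex.I / 2) := by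
    rw [← Finset.sum_sub_distrib, Finset.sum_mul]
    refine Finset.sum_congr rfl fun i _ => ?_
    rw [Complex.ofReal_sin, Complex.sin]
    push_cast
    ring_nf
  rw [h, norm_mul]
  have h2 : ‖(Complex.I / 2 : ℂ)‖ = 1 / 2 := by simp
  rw [h2]
  have := norm_sub_le (∑ i ∈ t, y i * Complex.exp (s i * (-x : ℝ) * Complex.I))
    (∑ i ∈ t, y i * Complex.exp (s i * x * Complex.I))
  linarith [hC x, hC (-x)]

lemma norm_sum_mul_favardMultiplier_le {ι : Type*} (t : Finset ι) (s : ι → ℝ) (y : ι → ℂ) {C : ℝ}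
    (hC : ∀ x : ℝ, ‖∑ i ∈ t, y i * Complex.exp (s i * x * Complex.I)‖ ≤ C) {u : ℝ} (hu : 0 < u) :
    ‖∑ i ∈ t, y i * (favardMultiplier (s i) u : ℂ)‖ ≤ 2 * C * (π / (π ^ 2 + u ^ 2)) := by
  set τ := (1 - Real.exp (-u)) / (1 + Real.exp (-u)) with hτ
  have hτ0 : 0 ≤ τ := by
    have hlt : Real.exp (-u) < 1 := by simpa using hu
    exact div_nonneg (by linarith) (by positivity)
  have hInt : ∀ i, Integrable (fun x : ℝ =>
      y i * ((Real.sin (π * x) * Real.exp (-u * x) * Real.sin (s i * x) : ℝ) : ℂ))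
      (volume.restrict (Ioi 0)) := by
    intro i
    have h : Integrable (fun x : ℝ => Real.sin (π * x) * Real.exp (-u * x) * Real.sin (s i * x))
        (volume.restrict (Ioi 0)) := ?_
    · exact h.ofReal.const_mul _
    refine Integrable.mono' (integrableOn_abs_sin_mul_exp_neg hu)
      (Continuous.aestronglyMeasurable (by fun_prop)) (ae_of_all _ fun x => ?_)
    rw [norm_mul, norm_mul, Real.norm_of_nonneg (Real.exp_pos _).le]
    exact mul_le_of_le_one_right (by positivity) (Real.abs_sin_le_one _)
  have hrep : ∑ i ∈ t, y i * (favardMultiplier (s i) u : ℂ) =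
      (2 * τ : ℝ) * ∫ x in Ioi (0 : ℝ), ∑ i ∈ t,
        y i * ((Real.sin (π * x) * Real.exp (-u * x) * Real.sin (s i * x) : ℝ) : ℂ) := by
    rw [integral_finsetSum _ fun i _ => hInt i, Finset.mul_sum]
    refine Finset.sum_congr rfl fun i _ => ?_
    rw [integral_const_mul, integral_complex_ofReal, integral_sin_mul_sin_mul_exp_neg hu,
      favardMultiplier, ← hτ]
    push_cast
    ring
  have hbound : ‖∫ x in Ioi (0 : ℝ), ∑ i ∈ t,
        y i * ((Real.sin (π * x) * Real.exp (-u * x) * Real.sin (s i * x) : ℝ) : ℂ)‖ ≤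
      ∫ x in Ioi (0 : ℝ), C * (|Real.sin (π * x)| * Real.exp (-u * x)) := by
    refine norm_integral_le_of_norm_le ((integrableOn_abs_sin_mul_exp_neg hu).const_mul C)
      (ae_of_all _ fun x => ?_)
    have hfac : ∑ i ∈ t,
        y i * ((Real.sin (π * x) * Real.exp (-u * x) * Real.sin (s i * x) : ℝ) : ℂ) =
        ((Real.sin (π * x) * Real.exp (-u * x) : ℝ) : ℂ) *
          ∑ i ∈ t, y i * (Real.sin (s i * x) : ℂ) := by
      rw [Finset.mul_sum]
      refine Finset.sum_congr rfl fun i _ => ?_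
      push_cast
      ring
    rw [hfac, norm_mul, Complex.norm_real, norm_mul, Real.norm_of_nonneg (Real.exp_pos _).le,
      mul_comm]
    exact mul_le_mul_of_nonneg_right (norm_sum_mul_sin_le t s y hC x) (by positivity)
  rw [integral_const_mul] at hbound
  rw [hrep, norm_mul, Complex.norm_real, Real.norm_of_nonneg (by positivity),
    ← integral_abs_sin_mul_exp_neg hu, ← hτ]
  calc _ ≤ _ := mul_le_mul_of_nonneg_left hbound (by positivity)
    _ = _ := by ring

/-- **Bohr–Favard inequality** for trigonometric polynomials whose frequencies have modulus at
least `π`, with the sharp constant. -/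
lemma norm_sum_div_le_of_pi_le_abs {ι : Type*} (t : Finset ι) (s : ι → ℝ) (y : ι → ℂ) {C : ℝ}
    (hs : ∀ i ∈ t, π ≤ |s i|)
    (hC : ∀ x : ℝ, ‖∑ i ∈ t, y i * Complex.exp (s i * x * Complex.I)‖ ≤ C) :
    ‖∑ i ∈ t, y i / (s i : ℂ)‖ ≤ C / 2 := by
  have hπ := Real.pi_pos
  have hrep : ((2 * π : ℝ) : ℂ) * ∑ i ∈ t, y i / (s i : ℂ) =
      ∫ u in Ioi (0 : ℝ), ∑ i ∈ t, y i * (favardMultiplier (s i) u : ℂ) := by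
    rw [integral_finsetSum _ fun i hi =>
      ((integrableOn_favardMultiplier (hs i hi)).ofReal).const_mul _, Finset.mul_sum]
    refine Finset.sum_congr rfl fun i hi => ?_
    rw [integral_const_mul, integral_complex_ofReal, integral_favardMultiplier (hs i hi)]
    push_cast
    ring
  have hbound : ‖∫ u in Ioi (0 : ℝ), ∑ i ∈ t, y i * (favardMultiplier (s i) u : ℂ)‖ ≤
      ∫ u in Ioi (0 : ℝ), 2 * C * (π / (π ^ 2 + u ^ 2)) := by
    refine norm_integral_le_of_norm_le (integral_pi_div_pi_sq_add_sq.1.const_mul (2 * C)) ?_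
    filter_upwards [ae_restrict_mem measurableSet_Ioi] with u hu
    exact norm_sum_mul_favardMultiplier_le t s y hC hu
  rw [← hrep, integral_const_mul, integral_pi_div_pi_sq_add_sq.2, norm_mul, Complex.norm_real,
    Real.norm_of_nonneg (by positivity)] at hbound
  have : 2 * π * ‖∑ i ∈ t, y i / (s i : ℂ)‖ ≤ 2 * π * (C / 2) := by linarith
  exact le_of_mul_le_mul_left this (by positivity)

section Operators

variable {H : Type*} [NormedAddCommGroup H] [InnerProductSpace ℂ H] [CompleteSpace H]

lemma norm_le_of_abs_re_inner_le {S : H →L[ℂ] H} (hS : IsSelfAdjoint S) {δ : ℝ} (hδ : 0 ≤ δ)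
    (h : ∀ x, |(inner ℂ (S x) x).re| ≤ δ * ‖x‖ ^ 2) : ‖S‖ ≤ δ := by
  rw [S.norm_eq_iSup_rayleighQuotient hS.isSymmetric]
  refine ciSup_le fun x => ?_
  rw [ContinuousLinearMap.rayleighQuotient, ContinuousLinearMap.reApplyInnerSelf_apply, abs_div,
    abs_of_nonneg (sq_nonneg ‖x‖)]
  exact div_le_of_le_mul₀ (sq_nonneg _) hδ (h x)

lemma norm_le_one_of_isSelfAdjoint_of_mul_self {P : H →L[ℂ] H} (hP : IsSelfAdjoint P)
    (hP2 : P * P = P) : ‖P‖ ≤ 1 := by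
  have h := CStarRing.norm_star_mul_self (x := P)
  rw [hP.star_eq, hP2] at h
  by_contra! hlt
  nlinarith

lemma norm_sum_smul_proj_le_one {ι : Type*} (t : Finset ι) {P : ι → H →L[ℂ] H}
    (hsa : ∀ i, IsSelfAdjoint (P i)) (hidem : ∀ i, P i * P i = P i)
    (horth : ∀ i j, i ≠ j → P i * P j = 0) {c : ι → ℂ} (hc : ∀ i, ‖c i‖ = 1) :
    ‖∑ i ∈ t, c i • P i‖ ≤ 1 := by
  classical
  have hmul : ∀ c d : ι → ℂ, (∑ i ∈ t, c i • P i) * (∑ i ∈ t, d i • P i) =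
      ∑ i ∈ t, (c i * d i) • P i := by
    intro c d
    rw [Finset.sum_mul_sum]
    refine Finset.sum_congr rfl fun i hi => ?_
    rw [Finset.sum_eq_single_of_mem i hi fun j _ hj => by
      rw [smul_mul_smul_comm, horth i j hj.symm, smul_zero], smul_mul_smul_comm, hidem]
  have hstar : star (∑ i ∈ t, c i • P i) = ∑ i ∈ t, star (c i) • P i := by
    rw [star_sum]
    exact Finset.sum_congr rfl fun i _ => by rw [star_smul, (hsa i).star_eq]
  have hprod : star (∑ i ∈ t, c i • P i) * (∑ i ∈ t, c i • P i) = ∑ i ∈ t, P i := by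
    rw [hstar, hmul]
    refine Finset.sum_congr rfl fun i _ => ?_
    have : star (c i) * c i = 1 := by
      simpa [hc i] using Complex.conj_mul' (c i)
    rw [this, one_smul]
  have hE : ‖∑ i ∈ t, P i‖ ≤ 1 := by
    refine norm_le_one_of_isSelfAdjoint_of_mul_self ?_ (by simpa using hmul 1 1)
    exact isSelfAdjoint_sum t fun i _ => hsa i
  have h := CStarRing.norm_star_mul_self (x := ∑ i ∈ t, c i • P i)
  rw [hprod] at h
  by_contra! hlt
  nlinarith

/-- The sharp Sylvester-type estimate for two finite families of mutually orthogonal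
projections weighted by real numbers at mutual distance at least `d`. -/
lemma dist_mul_norm_sum_proj_mul_sum_proj_le {ι κ : Type*} (t : Finset ι) (t' : Finset κ)
    {P : ι → H →L[ℂ] H} {Q : κ → H →L[ℂ] H}
    (hPsa : ∀ i, IsSelfAdjoint (P i)) (hPidem : ∀ i, P i * P i = P i)
    (hPorth : ∀ i j, i ≠ j → P i * P j = 0)
    (hQsa : ∀ i, IsSelfAdjoint (Q i)) (hQidem : ∀ i, Q i * Q i = Q i)
    (hQorth : ∀ i j, i ≠ j → Q i * Q j = 0) (a : ι → ℝ) (b : κ → ℝ) {d : ℝ} (hd : 0 < d)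
    (hab : ∀ i ∈ t, ∀ j ∈ t', d ≤ |a i - b j|) :
    d * ‖(∑ i ∈ t, P i) * ∑ j ∈ t', Q j‖ ≤
      π / 2 * ‖(∑ i ∈ t, (a i : ℂ) • P i) * (∑ j ∈ t', Q j) -
        (∑ i ∈ t, P i) * ∑ j ∈ t', (b j : ℂ) • Q j‖ := by
  classical
  have hπ := Real.pi_pos
  set W := (∑ i ∈ t, (a i : ℂ) • P i) * (∑ j ∈ t', Q j) -
        (∑ i ∈ t, P i) * ∑ j ∈ t', (b j : ℂ) • Q j with hW
  have hPmul : ∀ c : ι → ℂ, ∀ i ∈ t, P i * ∑ k ∈ t, c k • P k = c i • P i := by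
    intro c i hi
    rw [Finset.mul_sum, Finset.sum_eq_single_of_mem i hi fun j _ hj => by
      rw [mul_smul_comm, hPorth i j hj.symm, smul_zero], mul_smul_comm, hPidem]
  have hQmul : ∀ c : κ → ℂ, ∀ j ∈ t', (∑ k ∈ t', c k • Q k) * Q j = c j • Q j := by
    intro c j hj
    rw [Finset.sum_mul, Finset.sum_eq_single_of_mem j hj fun i _ hi => by
      rw [smul_mul_assoc, hQorth i j hi, smul_zero], smul_mul_assoc, hQidem]
  have hPWQ : ∀ i ∈ t, ∀ j ∈ t', P i * W * Q j = ((a i - b j : ℝ) : ℂ) • (P i * Q j) := by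
    intro i hi j hj
    have h1 : P i * ∑ k ∈ t, P k = P i := by simpa using hPmul 1 i hi
    have h2 : (∑ k ∈ t', Q k) * Q j = Q j := by simpa using hQmul 1 j hj
    calc P i * W * Q j = (P i * ∑ i ∈ t, (a i : ℂ) • P i) * ((∑ j ∈ t', Q j) * Q j) -
          (P i * ∑ i ∈ t, P i) * ((∑ j ∈ t', (b j : ℂ) • Q j) * Q j) := by
          rw [hW]; noncomm_ring
      _ = _ := by
          rw [h1, h2, hPmul (fun i => (a i : ℂ)) i hi, hQmul (fun j => (b j : ℂ)) j hj,
            smul_mul_assoc, mul_smul_comm, ← sub_smul]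
          push_cast
          rfl
  have hscalar : ∀ v w : H, d * ‖inner ℂ v (((∑ i ∈ t, P i) * ∑ j ∈ t', Q j) w)‖ ≤
      π / 2 * (‖W‖ * ‖v‖ * ‖w‖) := by
    intro v w
    have hfav := norm_sum_div_le_of_pi_le_abs (t ×ˢ t') (fun p => (a p.1 - b p.2) * (π / d))
      (fun p => inner ℂ v ((P p.1 * W * Q p.2) w)) (C := ‖W‖ * ‖v‖ * ‖w‖) ?_ ?_
    · have hsum : ∑ p ∈ t ×ˢ t', inner ℂ v ((P p.1 * W * Q p.2) w) /
          (((a p.1 - b p.2) * (π / d) : ℝ) : ℂ) =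
          ((d / π : ℝ) : ℂ) * inner ℂ v (((∑ i ∈ t, P i) * ∑ j ∈ t', Q j) w) := by
        rw [Finset.sum_mul_sum, ← Finset.sum_product', sum_apply, inner_sum,
          Finset.mul_sum]
        refine Finset.sum_congr rfl fun p hp => ?_
        obtain ⟨hi, hj⟩ := Finset.mem_product.1 hp
        have hne : ((a p.1 - b p.2 : ℝ) : ℂ) ≠ 0 := by
          exact_mod_cast abs_pos.1 (hd.trans_le (hab _ hi _ hj))
        have hdc : (d : ℂ) ≠ 0 := by exact_mod_cast hd.ne'
        have hπc : (π : ℂ) ≠ 0 := by exact_mod_cast hπ.ne'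
        rw [hPWQ _ hi _ hj, smul_apply, inner_smul_right, Complex.ofReal_mul]
        push_cast at hne ⊢
        field_simp
      rw [hsum, norm_mul, Complex.norm_real, Real.norm_of_nonneg (by positivity)] at hfav
      rw [div_mul_eq_mul_div, div_le_iff₀ hπ] at hfav
      linarith
    · intro p hp
      obtain ⟨hi, hj⟩ := Finset.mem_product.1 hp
      rw [abs_mul, abs_of_pos (div_pos hπ hd)]
      calc π = d * (π / d) := by field_simp
        _ ≤ _ := mul_le_mul_of_nonneg_right (hab _ hi _ hj) (by positivity)
    · intro x
      set U := ∑ i ∈ t, Complex.exp ((a i * (π / d * x) : ℝ) * Complex.I) • P i with hU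
      set V := ∑ j ∈ t', Complex.exp ((-b j * (π / d * x) : ℝ) * Complex.I) • Q j with hV
      have hUn : ‖U‖ ≤ 1 := norm_sum_smul_proj_le_one t hPsa hPidem hPorth
        fun i => Complex.norm_exp_ofReal_mul_I _
      have hVn : ‖V‖ ≤ 1 := norm_sum_smul_proj_le_one t' hQsa hQidem hQorth
        fun j => Complex.norm_exp_ofReal_mul_I _
      have hsum : ∑ p ∈ t ×ˢ t', inner ℂ v ((P p.1 * W * Q p.2) w) *
          Complex.exp ((((a p.1 - b p.2) * (π / d) : ℝ) : ℂ) * x * Complex.I) =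
          inner ℂ v ((U * W * V) w) := by
        rw [hU, hV, Finset.sum_mul, Finset.sum_mul_sum, ← Finset.sum_product',
          sum_apply, inner_sum]
        refine Finset.sum_congr rfl fun p _ => ?_
        rw [smul_mul_assoc, smul_mul_smul_comm, smul_apply, inner_smul_right,
          ← Complex.exp_add, mul_comm]
        congr 2
        push_cast
        ring
      rw [hsum]
      calc ‖inner ℂ v ((U * W * V) w)‖ ≤ ‖v‖ * ‖(U * W * V) w‖ := norm_inner_le_norm _ _
        _ ≤ ‖v‖ * (‖U‖ * ‖W‖ * ‖V‖ * ‖w‖) := by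
            gcongr
            refine (ContinuousLinearMap.le_opNorm _ _).trans ?_
            gcongr
            exact (norm_mul_le _ _).trans (by gcongr; exact norm_mul_le _ _)
        _ ≤ ‖v‖ * (1 * ‖W‖ * 1 * ‖w‖) := by gcongr
        _ = _ := by ring
  rw [mul_comm, ← le_div_iff₀ hd]
  refine ContinuousLinearMap.opNorm_le_bound _ (by positivity) fun w => ?_
  set z := ((∑ i ∈ t, P i) * ∑ j ∈ t', Q j) w with hz
  have h := hscalar z w
  rw [← hz, inner_self_eq_norm_sq_to_K] at h
  rcases (norm_nonneg z).eq_or_lt with h0 | h0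
  · rw [← h0]; positivity
  · rw [div_mul_eq_mul_div, le_div_iff₀ hd]
    refine le_of_mul_le_mul_right ?_ h0
    simp at h
    nlinarith

namespace IsSpectralMeasure

variable {T : H →L[ℂ] H} {E : Set ℝ → H →L[ℂ] H}

lemma map_empty (hE : IsSpectralMeasure T E) : E ∅ = 0 := by
  ext x
  have h := hE.countably_additive (fun _ => ∅) (fun _ => MeasurableSet.empty)
    (fun _ _ _ => by simp [Function.onFun]) x
  exact (summable_const_iff _).1 h.summable

lemma re_inner_mem_Icc (hE : IsSpectralMeasure T E) {Δ : Set ℝ} (hΔ : MeasurableSet Δ)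
    {a b : ℝ} (hab : Δ ⊆ Icc a b) {x : H} (hx : E Δ x = x) :
    (inner ℂ (T x) x).re ∈ Icc (a * ‖x‖ ^ 2) (b * ‖x‖ ^ 2) := by
  rcases Δ.eq_empty_or_nonempty with rfl | hne
  · rw [hE.map_empty] at hx
    have hx0 : x = 0 := hx.symm
    simp [hx0]
  have hexp : ∀ μ : ℝ, ‖T x - (μ : ℂ) • x‖ ^ 2 =
      ‖T x‖ ^ 2 - 2 * μ * (inner ℂ (T x) x).re + μ ^ 2 * ‖x‖ ^ 2 := by
    intro μ
    rw [@norm_sub_sq ℂ, inner_smul_right, norm_smul, mul_pow, Complex.norm_real,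
      Real.norm_eq_abs, sq_abs]
    simp
    ring
  have hsq : ∀ μ r : ℝ, 0 ≤ r → (∀ y ∈ Δ, r ≤ |μ - y|) → r ^ 2 * ‖x‖ ^ 2 ≤
      ‖T x‖ ^ 2 - 2 * μ * (inner ℂ (T x) x).re + μ ^ 2 * ‖x‖ ^ 2 := by
    intro μ r hr h
    have h1 : r ≤ Metric.infDist μ Δ := (Metric.le_infDist hne).2 fun {y} hy => h y hy
    rw [← hexp, ← mul_pow]
    refine pow_le_pow_left₀ (by positivity) ?_ 2
    exact (mul_le_mul_of_nonneg_right h1 (norm_nonneg x)).trans (hE.spectrum_loc Δ hΔ x hx μ)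
  set q := (inner ℂ (T x) x).re
  set n := ‖x‖ ^ 2
  have hn : 0 ≤ n := sq_nonneg _
  constructor
  · by_contra! hlt
    have hε : 0 < a * n - q := by linarith
    set M := (‖T x‖ ^ 2 + 1) / (2 * (a * n - q)) + |a| with hM
    have hM0 : 0 ≤ M := by positivity
    have h := hsq (-M) (M + a) (by linarith [neg_abs_le a,
      show 0 ≤ (‖T x‖ ^ 2 + 1) / (2 * (a * n - q)) by positivity]) fun y hy => by
        rw [abs_sub_comm]
        exact le_trans (by linarith [(hab hy).1]) (le_abs_self _)
    have hM2 : ‖T x‖ ^ 2 + 1 ≤ M * (2 * (a * n - q)) := by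
      rw [hM, add_mul, div_mul_cancel₀ _ (by positivity)]
      have : 0 ≤ |a| * (2 * (a * n - q)) := by positivity
      linarith
    nlinarith [mul_nonneg (sq_nonneg a) hn]
  · by_contra! hlt
    have hε : 0 < q - b * n := by linarith
    set M := (‖T x‖ ^ 2 + 1) / (2 * (q - b * n)) + |b| with hM
    have hM0 : 0 ≤ M := by positivity
    have h := hsq M (M - b) (by linarith [le_abs_self b,
      show 0 ≤ (‖T x‖ ^ 2 + 1) / (2 * (q - b * n)) by positivity]) fun y hy =>
        le_trans (by linarith [(hab hy).2]) (le_abs_self _)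
    have hM2 : ‖T x‖ ^ 2 + 1 ≤ M * (2 * (q - b * n)) := by
      rw [hM, add_mul, div_mul_cancel₀ _ (by positivity)]
      have : 0 ≤ |b| * (2 * (q - b * n)) := by positivity
      linarith
    nlinarith [mul_nonneg (sq_nonneg b) hn]

lemma mul_self (hE : IsSpectralMeasure T E) {Δ : Set ℝ} (hΔ : MeasurableSet Δ) :
    E Δ * E Δ = E Δ := by
  rw [hE.map_inter Δ Δ hΔ hΔ, inter_self]

lemma eq_zero_of_norm_lt (hE : IsSpectralMeasure T E) {Δ : Set ℝ} (hΔ : MeasurableSet Δ)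
    {a b : ℝ} (hab : Δ ⊆ Icc a b) (h : ‖T‖ < a ∨ b < -‖T‖) : E Δ = 0 := by
  ext x
  have hx : E Δ (E Δ x) = E Δ x := congrArg (· x) (hE.mul_self hΔ)
  have hq := hE.re_inner_mem_Icc hΔ hab hx
  set z := E Δ x
  have hb : |(inner ℂ (T z) z).re| ≤ ‖T‖ * ‖z‖ ^ 2 := by
    refine (Complex.abs_re_le_norm _).trans ((norm_inner_le_norm _ _).trans ?_)
    rw [sq, ← mul_assoc]
    gcongr
    exact T.le_opNorm z
  by_contra hz
  have hz : 0 < ‖z‖ ^ 2 := by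
    have := norm_pos_iff.2 hz
    positivity
  rw [abs_le] at hb
  rcases h with h | h
  · nlinarith [hq.1, hb.2]
  · nlinarith [hq.2, hb.1]

/-- Approximation of a self-adjoint operator on a spectral subspace by a finite combination of
mutually orthogonal projections with coefficients in the given set. -/
lemma exists_finite_approx (hT : IsSelfAdjoint T) (hE : IsSpectralMeasure T E) {S : Set ℝ}
    (hS : MeasurableSet S) {δ : ℝ} (hδ : 0 < δ) :
    ∃ (t : Finset ℕ) (P : ℕ → H →L[ℂ] H) (a : ℕ → ℝ), (∀ i ∈ t, a i ∈ S) ∧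
      (∀ i, IsSelfAdjoint (P i)) ∧ (∀ i, P i * P i = P i) ∧ (∀ i j, i ≠ j → P i * P j = 0) ∧
      ∑ i ∈ t, P i = E S ∧ ‖T * E S - ∑ i ∈ t, (a i : ℂ) • P i‖ ≤ δ := by
  classical
  set e : ℕ ≃ ℤ := Equiv.intEquivNat.symm
  set D : ℕ → Set ℝ := fun n => S ∩ (fun y : ℝ => ⌊y / δ⌋) ⁻¹' {e n} with hD
  have hDm : ∀ n, MeasurableSet (D n) := fun n =>
    hS.inter ((Int.measurable_floor.comp (measurable_id.div_const δ)) (measurableSet_singleton _))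
  have hDd : ∀ i j, i ≠ j → D i ∩ D j = ∅ := by
    intro i j hij
    refine eq_empty_of_forall_notMem fun y hy => hij (e.injective ?_)
    exact hy.1.2.symm.trans hy.2.2
  have hDU : ⋃ n, D n = S := by
    refine subset_antisymm (iUnion_subset fun n => inter_subset_left) fun y hy => ?_
    exact mem_iUnion.2 ⟨e.symm ⌊y / δ⌋, hy, by simp⟩
  have hDI : ∀ n, D n ⊆ Icc (e n * δ) ((e n + 1) * δ) := by
    rintro n y ⟨-, hy⟩
    have hy : ⌊y / δ⌋ = e n := hy
    rw [Int.floor_eq_iff, le_div_iff₀ hδ, div_lt_iff₀ hδ] at hy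
    exact ⟨hy.1, hy.2.le⟩
  have hfin : {n | E (D n) ≠ 0}.Finite := by
    refine ((finite_Icc (-⌈‖T‖ / δ + 1⌉) ⌈‖T‖ / δ + 1⌉).preimage e.injective.injOn).subset ?_
    intro n hn
    by_contra hout
    refine hn (hE.eq_zero_of_norm_lt (hDm n) (hDI n) ?_)
    rw [mem_preimage, mem_Icc, not_and_or, not_le, not_le] at hout
    have hceil := Int.le_ceil (‖T‖ / δ + 1)
    have hTδ : ‖T‖ = ‖T‖ / δ * δ := by field_simp
    rcases hout with h | h
    · right
      have h' : (e n : ℝ) < -⌈‖T‖ / δ + 1⌉ := by exact_mod_cast h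
      nlinarith
    · left
      have h' : (⌈‖T‖ / δ + 1⌉ : ℝ) < e n := by exact_mod_cast h
      nlinarith
  have hne : ∀ n, E (D n) ≠ 0 → (D n).Nonempty := by
    intro n hn
    rw [nonempty_iff_ne_empty]
    intro h
    rw [h, hE.map_empty] at hn
    exact hn rfl
  choose! a ha using hne
  set t := hfin.toFinset
  have hidem := fun n => hE.mul_self (hDm n)
  have hsum : ∑ i ∈ t, E (D i) = E S := by
    ext x
    have h := hE.countably_additive D hDm
      (fun i j hij => disjoint_iff_inter_eq_empty.2 (hDd i j hij)) x
    rw [hDU] at h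
    rw [sum_apply]
    refine (hasSum_sum_of_ne_finset_zero fun n hn => ?_).unique h
    have : E (D n) = 0 := by simpa [t] using hn
    rw [this, zero_apply]
  refine ⟨t, fun n => E (D n), a, fun i hi => (ha i (by simpa [t] using hi)).1,
    fun n => hE.isSelfAdjoint _ (hDm n), hidem, fun i j hij => ?_, hsum, ?_⟩
  · rw [hE.map_inter _ _ (hDm i) (hDm j), hDd i j hij, hE.map_empty]
  have hinner : ∀ n x, inner ℂ (E (D n) x) x = ((‖E (D n) x‖ ^ 2 : ℝ) : ℂ) := by
    intro n x
    have h1 : E (D n) x = E (D n) (E (D n) x) := congrArg (· x) (hidem n).symm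
    conv_lhs => rw [h1]
    refine ((hE.isSelfAdjoint _ (hDm n)).isSymmetric _ _).trans ?_
    refine (inner_self_eq_norm_sq_to_K (𝕜 := ℂ) (E (D n) x)).trans ?_
    simp
  refine norm_le_of_abs_re_inner_le ?_ hδ.le fun x => ?_
  · refine IsSelfAdjoint.sub ?_ (isSelfAdjoint_sum _ fun i _ => ?_)
    · exact (hT.commute_iff (hE.isSelfAdjoint S hS)).1 (hE.commutes S hS)
    · exact IsSelfAdjoint.smul (Complex.conj_ofReal _) (hE.isSelfAdjoint _ (hDm i))
  have hterm : ∀ i ∈ t, |(inner ℂ (T (E (D i) x)) x).re - a i * ‖E (D i) x‖ ^ 2| ≤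
      δ * ‖E (D i) x‖ ^ 2 := by
    intro i hi
    have hx : E (D i) (E (D i) x) = E (D i) x := congrArg (· x) (hidem i)
    have hTx : T (E (D i) x) = E (D i) (T (E (D i) x)) := by
      conv_lhs => rw [← hx]
      exact congrArg (· (E (D i) x)) (hE.commutes _ (hDm i)).eq
    have hin : inner ℂ (T (E (D i) x)) x = inner ℂ (T (E (D i) x)) (E (D i) x) := by
      conv_lhs => rw [hTx]
      exact (hE.isSelfAdjoint _ (hDm i)).isSymmetric _ _
    have hq := hE.re_inner_mem_Icc (hDm i) (hDI i) hx
    have hai := hDI i (ha i (by simpa [t] using hi))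
    rw [hin, abs_le]
    have := sq_nonneg ‖E (D i) x‖
    constructor <;> nlinarith [hq.1, hq.2, hai.1, hai.2]
  have hrepr : (inner ℂ ((T * E S - ∑ i ∈ t, (a i : ℂ) • E (D i)) x) x).re =
      ∑ i ∈ t, ((inner ℂ (T (E (D i) x)) x).re - a i * ‖E (D i) x‖ ^ 2) := by
    rw [← hsum, Finset.mul_sum, ← Finset.sum_sub_distrib, sum_apply, sum_inner, Complex.re_sum]
    refine Finset.sum_congr rfl fun i _ => ?_
    rw [sub_apply, smul_apply, inner_sub_left, inner_smul_left, hinner]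
    simp [-Complex.ofReal_pow]
  rw [hrepr]
  have hES : ∑ i ∈ t, ‖E (D i) x‖ ^ 2 ≤ ‖x‖ ^ 2 := by
    have h1 : ((∑ i ∈ t, ‖E (D i) x‖ ^ 2 : ℝ) : ℂ) = inner ℂ (E S x) x := by
      rw [← hsum, sum_apply, sum_inner, Complex.ofReal_sum]
      exact Finset.sum_congr rfl fun i _ => (hinner i x).symm
    have h2 : ∑ i ∈ t, ‖E (D i) x‖ ^ 2 = (inner ℂ (E S x) x).re := by
      rw [← h1, Complex.ofReal_re]
    rw [h2]
    refine (Complex.re_le_norm _).trans ((norm_inner_le_norm _ _).trans ?_)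
    rw [sq]
    gcongr
    refine (ContinuousLinearMap.le_of_opNorm_le _
      (norm_le_one_of_isSelfAdjoint_of_mul_self (hE.isSelfAdjoint S hS) (hE.mul_self hS)) x).trans
      (by rw [one_mul])
  calc _ ≤ ∑ i ∈ t, |(inner ℂ (T (E (D i) x)) x).re - a i * ‖E (D i) x‖ ^ 2| :=
        Finset.abs_sum_le_sum_abs _ _
    _ ≤ ∑ i ∈ t, δ * ‖E (D i) x‖ ^ 2 := Finset.sum_le_sum hterm
    _ = δ * ∑ i ∈ t, ‖E (D i) x‖ ^ 2 := by rw [Finset.mul_sum]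
    _ ≤ _ := by gcongr

end IsSpectralMeasure

end Operators

/-- **Proposition (Bhatia–Davis–Koosis / Bhatia–Davis–McIntosh / McEachin).**
For bounded self-adjoint operators `A`, `B` and Borel sets `σ`, `Δ` on the real axis,
`dist(σ, Δ) ‖E_A(σ) E_B(Δ)‖ ≤ (π/2) ‖A − B‖`. -/
theorem dist_mul_norm_proj_mul_proj_le_pi_div_two
    {H : Type*} [NormedAddCommGroup H] [InnerProductSpace ℂ H] [CompleteSpace H]
    (A B : H →L[ℂ] H) (hA : IsSelfAdjoint A) (hB : IsSelfAdjoint B)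
    (σ Δ : Set ℝ) (hσ : MeasurableSet σ) (hΔ : MeasurableSet Δ)
    (EA EB : Set ℝ → H →L[ℂ] H) (hEA : IsSpectralMeasure A EA) (hEB : IsSpectralMeasure B EB) :
    sInf (Set.image2 dist σ Δ) * ‖EA σ * EB Δ‖ ≤ π / 2 * ‖A - B‖ := by
  have hπ := Real.pi_pos
  set d := sInf (Set.image2 dist σ Δ) with hd
  have hbdd : BddBelow (Set.image2 dist σ Δ) :=
    ⟨0, by rintro _ ⟨p, -, q, -, rfl⟩; exact dist_nonneg⟩
  have hd0 : 0 ≤ d := Real.sInf_nonneg (by rintro _ ⟨p, -, q, -, rfl⟩; exact dist_nonneg)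
  rcases hd0.eq_or_lt with h0 | hdpos
  · rw [← h0, zero_mul]
    positivity
  have hnA : ‖EA σ‖ ≤ 1 :=
    norm_le_one_of_isSelfAdjoint_of_mul_self (hEA.isSelfAdjoint σ hσ) (hEA.mul_self hσ)
  have hnB : ‖EB Δ‖ ≤ 1 :=
    norm_le_one_of_isSelfAdjoint_of_mul_self (hEB.isSelfAdjoint Δ hΔ) (hEB.mul_self hΔ)
  have happrox : ∀ δ > 0, d * ‖EA σ * EB Δ‖ ≤ π / 2 * (‖A - B‖ + 2 * δ) := by
    intro δ hδ
    obtain ⟨t, P, a, ha, hPsa, hPidem, hPorth, hPsum, hPA⟩ :=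
      hEA.exists_finite_approx hA hσ hδ
    obtain ⟨t', Q, b, hb, hQsa, hQidem, hQorth, hQsum, hQB⟩ :=
      hEB.exists_finite_approx hB hΔ hδ
    have h := dist_mul_norm_sum_proj_mul_sum_proj_le t t' hPsa hPidem hPorth hQsa hQidem hQorth
      a b hdpos fun i hi j hj => csInf_le hbdd ⟨a i, ha i hi, b j, hb j hj, rfl⟩
    rw [hPsum, hQsum] at h
    refine h.trans (mul_le_mul_of_nonneg_left ?_ (by positivity))
    set A' := ∑ i ∈ t, (a i : ℂ) • P i
    set B' := ∑ j ∈ t', (b j : ℂ) • Q j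
    have hsplit : A' * EB Δ - EA σ * B' = EA σ * (A - B) * EB Δ -
        (A * EA σ - A') * EB Δ + EA σ * (B * EB Δ - B') := by
      rw [(hEA.commutes σ hσ).eq]
      noncomm_ring
    have hmain : ‖EA σ * (A - B) * EB Δ‖ ≤ ‖A - B‖ := calc
      _ ≤ ‖EA σ‖ * ‖A - B‖ * ‖EB Δ‖ := norm_mul₃_le
      _ ≤ 1 * ‖A - B‖ * 1 := by gcongr
      _ = _ := by ring
    have herrA : ‖(A * EA σ - A') * EB Δ‖ ≤ δ := calc
      _ ≤ ‖A * EA σ - A'‖ * ‖EB Δ‖ := norm_mul_le _ _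
      _ ≤ δ * 1 := by gcongr
      _ = δ := mul_one δ
    have herrB : ‖EA σ * (B * EB Δ - B')‖ ≤ δ := calc
      _ ≤ ‖EA σ‖ * ‖B * EB Δ - B'‖ := norm_mul_le _ _
      _ ≤ 1 * δ := by gcongr
      _ = δ := one_mul δ
    rw [hsplit]
    refine (norm_add_le _ _).trans ?_
    linarith [norm_sub_le (EA σ * (A - B) * EB Δ) ((A * EA σ - A') * EB Δ)]
  refine le_of_forall_pos_le_add fun ε hε => ?_
  have h := happrox (ε / π) (by positivity)
  have : π / 2 * (‖A - B‖ + 2 * (ε / π)) = π / 2 * ‖A - B‖ + ε := by field_simp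
  linarith
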